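/- Let R be a one-dimensional Noetherian local ring and M a finitely generated R-module that has a rank. Then [M] = 0 in the reduced rationalized Grothendieck group (G(R)/Z[R]) \otimes_Z Q. -/

import Mathlib

open CategoryTheory IsLocalRing

open scoped TensorProduct

noncomputable section

variable (R : Type) [CommRing R]

/-- Objects: finitely generated `R`-modules (in `Type 0`). -/
def FGMod : Type 1 := {M : ModuleCat.{0} R // Module.Finite R M}

/-- The subgroup of relations coming from short exact sequences. -/
def grothRels : AddSubgroup (FreeAbelianGroup (FGMod R)) :=
  AddSubgroup.closure {x | ∃ (A B C : FGMod R) (f : A.1 →ₗ[R] B.1) (g : B.1 →ₗ[R] C.1),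
    Function.Injective f ∧ Function.Surjective g ∧ Function.Exact f g ∧
    x = FreeAbelianGroup.of B - FreeAbelianGroup.of A - FreeAbelianGroup.of C}

/-- The Grothendieck group of finitely generated `R`-modules. -/
def GGroup : Type 1 := FreeAbelianGroup (FGMod R) ⧸ grothRels R

instance : AddCommGroup (GGroup R) :=
  inferInstanceAs (AddCommGroup (FreeAbelianGroup (FGMod R) ⧸ grothRels R))

/-- The class `[M]` of a finitely generated module in the Grothendieck group. -/
def gclass (M : Type) [AddCommGroup M] [Module R M] [hM : Module.Finite R M] :
    GGroup R :=
  QuotientAddGroup.mk (FreeAbelianGroup.of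
    ⟨ModuleCat.of R M, by exact hM⟩)

/-- The reduced Grothendieck group `G(R)/ℤ·[R]`. -/
def GBar : Type 1 := GGroup R ⧸ AddSubgroup.zmultiples (gclass R R)

instance : AddCommGroup (GBar R) :=
  inferInstanceAs (AddCommGroup (GGroup R ⧸ AddSubgroup.zmultiples (gclass R R)))

/-- The class of `M` in the reduced rationalized Grothendieck group
`(G(R)/ℤ[R]) ⊗_ℤ ℚ`. -/
def gbarQClass (M : Type) [AddCommGroup M] [Module R M] [Module.Finite R M] :
    ℚ ⊗[ℤ] GBar R :=
  (1 : ℚ) ⊗ₜ[ℤ] (QuotientAddGroup.mk (gclass R M) : GBar R)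

end

/-!
A prime filtration of `M` shows that an additive function on `G(R)` which vanishes on `[R/p]` for
every non-minimal prime `p` sends `[M]` to a combination of the `[R/p]` with `p` minimal, with
coefficients the lengths of the `M_p`. If `M` has rank `r`, these coefficients are `r` times those
of `R`, so `[M]` and `r[R]` have the same image.

It remains to see that `[R/p]` is torsion in `G(R)` when `p` is not minimal. Choose a prime `q < p`
and an element `x ∈ p` lying neither in `q` nor in any maximal ideal other than `p`. As `x` is
regular on `R/q`, the module `(R/q)/x(R/q)` has class zero, and since its support is `{p}`, this
class is a positive multiple of `[R/p]`.
-/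

section GrothendieckGroup

variable {R : Type} [CommRing R]

theorem gclass_eq_add_of_exact {A B C : Type} [AddCommGroup A] [Module R A] [Module.Finite R A]
    [AddCommGroup B] [Module R B] [Module.Finite R B]
    [AddCommGroup C] [Module R C] [Module.Finite R C] {f : A →ₗ[R] B} {g : B →ₗ[R] C}
    (hf : Function.Injective f) (hg : Function.Surjective g) (hfg : Function.Exact f g) :
    gclass R B = gclass R A + gclass R C := by
  refine (QuotientAddGroup.eq.2 ?_).symm
  rw [neg_add_eq_sub, ← sub_sub]
  exact AddSubgroup.subset_closure ⟨_, _, _, f, g, hf, hg, hfg, rfl⟩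

theorem gclass_of_subsingleton (M : Type) [AddCommGroup M] [Module R M] [Module.Finite R M]
    [Subsingleton M] : gclass R M = 0 := by
  have h := gclass_eq_add_of_exact (R := R) (f := LinearMap.id (M := M)) (g := LinearMap.id)
    Function.injective_id Function.surjective_id fun x ↦ by simp [Subsingleton.elim x 0]
  simpa using h

theorem gclass_congr {M N : Type} [AddCommGroup M] [Module R M] [Module.Finite R M]
    [AddCommGroup N] [Module R N] [Module.Finite R N] (e : M ≃ₗ[R] N) :
    gclass R M = gclass R N := by
  have h := gclass_eq_add_of_exact (f := e.toLinearMap) (g := (0 : N →ₗ[R] PUnit.{1}))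
    e.injective (Function.surjective_to_subsingleton _) fun x ↦ by simp
  rw [gclass_of_subsingleton PUnit.{1}, add_zero] at h
  exact h.symm

open scoped Pointwise in
theorem gclass_quotSMulTop_eq_zero {M : Type} [AddCommGroup M] [Module R M] [Module.Finite R M]
    {x : R} (hx : IsSMulRegular M x) : gclass R (QuotSMulTop x M) = 0 :=
  left_eq_add.1 <| gclass_eq_add_of_exact (f := LinearMap.lsmul R M x) hx
    (Submodule.mkQ_surjective _) (LinearMap.exact_lsmul_mkQ_smul_top M x)

theorem exists_gclass_eq_nsmul_of_support_subset_singleton [IsNoetherianRing R]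
    (p : PrimeSpectrum R) {M : Type} [AddCommGroup M] [Module R M] [hM : Module.Finite R M]
    (hsupp : Module.support R M ⊆ {p}) :
    ∃ n : ℕ, gclass R M = n • gclass R (R ⧸ p.asIdeal) ∧ (n = 0 → Subsingleton M) := by
  induction hM using IsNoetherianRing.induction_on_isQuotientEquivQuotientPrime R with
  | subsingleton M => exact ⟨0, by simp [gclass_of_subsingleton], fun _ ↦ inferInstance⟩
  | quotient M q e =>
    have hq : q ∈ Module.support R M := by
      rw [e.support_eq, Module.support_of_algebra]
      simp [PrimeSpectrum.mem_zeroLocus]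
    obtain rfl : q = p := hsupp hq
    exact ⟨1, by rw [one_smul, gclass_congr e], by simp⟩
  | exact M₁ M₂ M₃ f g hf hg hfg ih₁ ih₃ =>
    rw [Module.support_of_exact hfg hf hg, Set.union_subset_iff] at hsupp
    obtain ⟨a, ha, ha₀⟩ := ih₁ hsupp.1
    obtain ⟨b, hb, hb₀⟩ := ih₃ hsupp.2
    refine ⟨a + b, by rw [gclass_eq_add_of_exact hf hg hfg, ha, hb, add_smul], fun hab ↦ ?_⟩
    have := ha₀ (by lia)
    have := hb₀ (by lia)
    rw [← Module.support_eq_empty_iff (R := R), Module.support_of_exact hfg hf hg]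
    simp [Module.support_eq_empty]

end GrothendieckGroup

section TorsionClasses

theorem isSMulRegular_quotient_of_notMem {R : Type*} [CommRing R] {p : Ideal R} [p.IsPrime] {x : R}
    (hx : x ∉ p) : IsSMulRegular (R ⧸ p) x :=
  .of_right_eq_zero_of_smul fun a ha ↦ by
    rw [Algebra.smul_def, mul_eq_zero] at ha
    exact ha.resolve_left fun h ↦ hx (Ideal.Quotient.eq_zero_iff_mem.1 h)

theorem exists_mem_forall_isMaximal_notMem {R : Type*} [CommRing R] [Finite (MaximalSpectrum R)]
    {p q : Ideal R} [p.IsMaximal] [q.IsPrime] (hqp : ¬ p ≤ q) :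
    ∃ x ∈ p, x ∉ q ∧ ∀ m : Ideal R, m.IsMaximal → x ∈ m → m = p := by
  have hfin : {m : Ideal R | m = q ∨ (m.IsMaximal ∧ m ≠ p)}.Finite := by
    refine ((Set.finite_range MaximalSpectrum.asIdeal).insert q).subset ?_
    rintro m (rfl | ⟨hm, -⟩)
    exacts [.inl rfl, .inr ⟨⟨m, hm⟩, rfl⟩]
  by_contra! hx
  obtain ⟨m, rfl | ⟨hm, hmp⟩, hle⟩ := (Ideal.subset_union_prime_finite hfin (f := id) q q
    (by rintro m (rfl | ⟨hm, -⟩) h _; exacts [(h rfl).elim, hm.isPrime])).1 (fun x hxp ↦ by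
      by_cases hxq : x ∈ q
      · exact Set.mem_biUnion (.inl rfl) hxq
      · obtain ⟨m, hm, hxm, hmp⟩ := hx x hxp hxq
        exact Set.mem_biUnion (.inr ⟨hm, hmp⟩) hxm)
  · exact hqp hle
  · exact hmp (Ideal.IsMaximal.eq_of_le ‹_› hm.ne_top hle).symm

theorem isOfFinAddOrder_gclass_quotient {R : Type} [CommRing R] [IsNoetherianRing R]
    [Finite (MaximalSpectrum R)] [Ring.KrullDimLE 1 R] {p : PrimeSpectrum R} (hp : ¬ IsMin p) :
    IsOfFinAddOrder (gclass R (R ⧸ p.asIdeal)) := by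
  have isMaximal_of_not_isMin (p' : PrimeSpectrum R) (hp' : ¬ IsMin p') : p'.asIdeal.IsMaximal :=
    (Ring.krullDimLE_one_iff.1 ‹_› p'.asIdeal p'.2).resolve_left
      (PrimeSpectrum.isMin_iff.not.1 hp')
  have := isMaximal_of_not_isMin p hp
  obtain ⟨q, hqp⟩ := not_isMin_iff.1 hp
  obtain ⟨x, hxp, hxq, hx⟩ := exists_mem_forall_isMaximal_notMem (p := p.asIdeal)
    (q := q.asIdeal) hqp.not_ge
  let N := QuotSMulTop x (R ⧸ q.asIdeal)
  have hsupp : Module.support R N = {p} := by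
    ext p'
    simp only [N, Module.support_quotSMulTop, Module.support_of_algebra, Set.mem_inter_iff,
      PrimeSpectrum.mem_zeroLocus, Ideal.Quotient.algebraMap_eq, Ideal.mk_ker,
      Set.singleton_subset_iff, SetLike.mem_coe, Set.mem_singleton_iff]
    constructor
    · rintro ⟨hqp', hxp'⟩
      have hlt : q < p' := lt_of_le_of_ne hqp' fun h ↦ hxq (h ▸ hxp')
      exact PrimeSpectrum.ext (hx _ (isMaximal_of_not_isMin p' hlt.not_isMin) hxp')
    · rintro rfl
      exact ⟨hqp.le, hxp⟩
  have : Nontrivial N :=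
    (Module.nonempty_support_iff (R := R)).1 (hsupp ▸ Set.singleton_nonempty p)
  obtain ⟨n, hn, hn₀⟩ := exists_gclass_eq_nsmul_of_support_subset_singleton p hsupp.subset
  refine isOfFinAddOrder_iff_nsmul_eq_zero.2 ⟨n, Nat.pos_of_ne_zero fun h ↦ ?_, ?_⟩
  · exact not_subsingleton N (hn₀ h)
  · rw [← hn, gclass_quotSMulTop_eq_zero (isSMulRegular_quotient_of_notMem hxq)]

end TorsionClasses

section MinimalPrimes

theorem finite_isMin_primeSpectrum (R : Type*) [CommRing R] [IsNoetherianRing R] :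
    Finite {p : PrimeSpectrum R // IsMin p} :=
  have := (minimalPrimes.finite_of_isNoetherianRing R).to_subtype
  .of_injective (β := minimalPrimes R)
    (fun p ↦ ⟨p.1.asIdeal, PrimeSpectrum.isMin_iff.1 p.2⟩)
    fun _ _ h ↦ Subtype.ext (PrimeSpectrum.ext (congrArg Subtype.val h))

theorem asIdeal_mem_associatedPrimes_of_isMin {R : Type*} [CommRing R] [IsNoetherianRing R]
    {p : PrimeSpectrum R} (hp : IsMin p) : p.asIdeal ∈ associatedPrimes R R := by
  apply Module.associatedPrimes.minimalPrimes_annihilator_subset_associatedPrimes R R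
  rw [Module.annihilator_eq_bot.2 inferInstance]
  exact PrimeSpectrum.isMin_iff.1 hp

end MinimalPrimes

section LocalLength

variable {R : Type*} [CommRing R]

/-- The length of the localization `M_p` as a module over the local ring `R_p`. -/
noncomputable def localLength (p : PrimeSpectrum R) (M : Type*) [AddCommGroup M] [Module R M] :
    ℕ∞ :=
  Module.length (Localization p.asIdeal.primeCompl) (LocalizedModule p.asIdeal.primeCompl M)

variable (p : PrimeSpectrum R) {M : Type*} [AddCommGroup M] [Module R M]

theorem localLength_eq_add_of_exact {A B C : Type*} [AddCommGroup A] [Module R A]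
    [AddCommGroup B] [Module R B] [AddCommGroup C] [Module R C] {f : A →ₗ[R] B} {g : B →ₗ[R] C}
    (hf : Function.Injective f) (hg : Function.Surjective g) (hfg : Function.Exact f g) :
    localLength p B = localLength p A + localLength p C :=
  Module.length_eq_add_of_exact (LocalizedModule.map p.asIdeal.primeCompl f)
    (LocalizedModule.map p.asIdeal.primeCompl g) (LocalizedModule.map_injective _ f hf)
    (LocalizedModule.map_surjective _ g hg) (LocalizedModule.map_exact _ f g hfg)

theorem localLength_congr {N : Type*} [AddCommGroup N] [Module R N] (e : M ≃ₗ[R] N) :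
    localLength p M = localLength p N :=
  (IsLocalizedModule.mapEquiv p.asIdeal.primeCompl
    (LocalizedModule.mkLinearMap p.asIdeal.primeCompl M)
    (LocalizedModule.mkLinearMap p.asIdeal.primeCompl N) _ e).length_eq

variable {p}

theorem localLength_eq_zero_iff : localLength p M = 0 ↔ p ∉ Module.support R M :=
  Module.length_eq_zero_iff.trans Module.notMem_support_iff.symm

theorem localLength_ne_top [IsNoetherianRing R] [Module.Finite R M] (hp : IsMin p) :
    localLength p M ≠ ⊤ := by
  have : Ring.KrullDimLE 0 (Localization p.asIdeal.primeCompl) :=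
    .of_isLocalization p.asIdeal (PrimeSpectrum.isMin_iff.1 hp) _
  have : IsArtinianRing (Localization p.asIdeal.primeCompl) :=
    isArtinianRing_iff_krullDimLE_zero.2 this
  exact Module.length_ne_top

theorem localLength_self :
    localLength p R = Module.length (Localization p.asIdeal.primeCompl)
      (Localization p.asIdeal.primeCompl) :=
  ((IsLocalizedModule.linearEquiv p.asIdeal.primeCompl
    (LocalizedModule.mkLinearMap p.asIdeal.primeCompl R)
    (Algebra.linearMap R (Localization p.asIdeal.primeCompl))).extendScalarsOfIsLocalization
      p.asIdeal.primeCompl (Localization p.asIdeal.primeCompl)).length_eq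

theorem localLength_eq_mul_of_equiv_pi {r : ℕ}
    (e : LocalizedModule p.asIdeal.primeCompl M ≃ₗ[Localization p.asIdeal.primeCompl]
      (Fin r → Localization p.asIdeal.primeCompl)) :
    localLength p M = r * localLength p R := by
  rw [localLength, e.length_eq, Module.length_pi, localLength_self]
  simp

theorem localLength_quotient_self : localLength p (R ⧸ p.asIdeal) = 1 := by
  let A := Localization p.asIdeal.primeCompl
  let e : LocalizedModule p.asIdeal.primeCompl (R ⧸ p.asIdeal) ≃ₗ[A]
      A ⧸ p.asIdeal.map (algebraMap R A) :=
    LocalizedModule.equivTensorProduct _ _ ≪≫ₗ (Ideal.qoutMapEquivTensorQout A).symm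
  refine Module.length_eq_one_iff.2 (isSimpleModule_iff_quot_maximal.2 ⟨_, ?_, ⟨e⟩⟩)
  rw [Localization.AtPrime.map_eq_maximalIdeal]
  infer_instance

theorem localLength_quotient_eq_zero {q : PrimeSpectrum R} (h : ¬ q ≤ p) :
    localLength p (R ⧸ q.asIdeal) = 0 := by
  rw [localLength_eq_zero_iff, Module.support_of_algebra, PrimeSpectrum.mem_zeroLocus]
  simpa using h

end LocalLength

theorem map_gclass_eq_sum_localLength {R : Type} [CommRing R] [IsNoetherianRing R]
    [Fintype {p : PrimeSpectrum R // IsMin p}] {V : Type*} [AddCommGroup V] (φ : GGroup R →+ V)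
    (hφ : ∀ p : PrimeSpectrum R, ¬ IsMin p → φ (gclass R (R ⧸ p.asIdeal)) = 0)
    (M : Type) [AddCommGroup M] [Module R M] [hM : Module.Finite R M] :
    φ (gclass R M) = ∑ p : {p : PrimeSpectrum R // IsMin p},
      (localLength p.1 M).toNat • φ (gclass R (R ⧸ p.1.asIdeal)) := by
  induction hM using IsNoetherianRing.induction_on_isQuotientEquivQuotientPrime R with
  | subsingleton M =>
    simp [gclass_of_subsingleton, localLength_eq_zero_iff.2, Module.support_eq_empty]
  | quotient M q e =>
    simp_rw [gclass_congr e, localLength_congr _ e]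
    by_cases hq : IsMin q
    · rw [Fintype.sum_eq_single ⟨q, hq⟩]
      · simp [localLength_quotient_self]
      · rintro ⟨p, hp⟩ hpq
        rw [localLength_quotient_eq_zero fun hle ↦ hpq (Subtype.ext (hp.eq_of_le hle).symm)]
        simp
    · rw [hφ q hq, Finset.sum_eq_zero]
      rintro ⟨p, hp⟩ -
      rw [localLength_quotient_eq_zero fun hle ↦ hq (hp.mono hle)]
      simp
  | exact M₁ M₂ M₃ f g hf hg hfg ih₁ ih₃ =>
    rw [gclass_eq_add_of_exact hf hg hfg, map_add, ih₁, ih₃, ← Finset.sum_add_distrib]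
    refine Finset.sum_congr rfl fun p _ ↦ ?_
    rw [localLength_eq_add_of_exact p.1 hf hg hfg,
      ENat.toNat_add (localLength_ne_top p.2) (localLength_ne_top p.2), add_smul]

/-- The canonical map `G(R) → (G(R)/ℤ[R]) ⊗_ℤ ℚ`, used to compute `gbarQClass` additively. -/
noncomputable def gbarQHom (R : Type) [CommRing R] : GGroup R →+ ℚ ⊗[ℤ] GBar R :=
  (TensorProduct.mk ℤ ℚ (GBar R) 1).toAddMonoidHom.comp (QuotientAddGroup.mk' _)

theorem gbarQHom_gclass {R : Type} [CommRing R] (M : Type) [AddCommGroup M] [Module R M]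
    [Module.Finite R M] : gbarQHom R (gclass R M) = gbarQClass R M :=
  rfl

theorem gbarQHom_gclass_self (R : Type) [CommRing R] : gbarQHom R (gclass R R) = 0 := by
  have h : (QuotientAddGroup.mk (gclass R R) : GBar R) = 0 :=
    (QuotientAddGroup.eq_zero_iff _).2 (AddSubgroup.mem_zmultiples _)
  exact (congrArg _ h).trans (TensorProduct.tmul_zero _ _)

theorem gbarQHom_eq_zero_of_isOfFinAddOrder {R : Type} [CommRing R] {x : GGroup R}
    (hx : IsOfFinAddOrder x) : gbarQHom R x = 0 :=
  have : IsAddTorsionFree (ℚ ⊗[ℤ] GBar R) := .of_module_rat _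
  ((gbarQHom R).isOfFinAddOrder hx).eq_zero'

theorem stmt_13_general {R : Type} [CommRing R] [IsNoetherianRing R] [Finite (MaximalSpectrum R)]
    [Ring.KrullDimLE 1 R] {M : Type} [AddCommGroup M] [Module R M] [Module.Finite R M] {r : ℕ}
    (hM : ∀ p : PrimeSpectrum R, IsMin p → localLength p M = r * localLength p R) :
    gbarQClass R M = 0 := by
  have := finite_isMin_primeSpectrum R
  have := Fintype.ofFinite {p : PrimeSpectrum R // IsMin p}
  have hsum := map_gclass_eq_sum_localLength (gbarQHom R) fun p hp ↦
    gbarQHom_eq_zero_of_isOfFinAddOrder (isOfFinAddOrder_gclass_quotient hp)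
  calc gbarQClass R M
      = gbarQHom R (gclass R M) := (gbarQHom_gclass M).symm
    _ = r • gbarQHom R (gclass R R) := by
        simp only [hsum M, hsum R, Finset.smul_sum, smul_smul, hM _ (Subtype.prop _),
          ENat.toNat_mul, ENat.toNat_natCast]
    _ = 0 := by rw [gbarQHom_gclass_self, smul_zero]

/-- over a one-dimensional Noetherian local ring, a finitely generated
module having a rank has zero class in the reduced rationalized Grothendieck group. -/
theorem stmt_13 (R : Type) [CommRing R] [IsNoetherianRing R] [IsLocalRing R]
    (hdim : ringKrullDim R = 1)
    (M : Type) [AddCommGroup M] [Module R M] [Module.Finite R M]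
    (hrank : ∃ r : ℕ, ∀ (p : Ideal R) (hp : p ∈ associatedPrimes R R),
      haveI : p.IsPrime := hp.1
      Nonempty ((LocalizedModule p.primeCompl M) ≃ₗ[Localization p.primeCompl]
        (Fin r → Localization p.primeCompl))) :
    gbarQClass R M = 0 := by
  obtain ⟨r, hr⟩ := hrank
  have : Ring.KrullDimLE 1 R := Ring.krullDimLE_iff.2 hdim.le
  exact stmt_13_general (r := r) fun p hp ↦
    localLength_eq_mul_of_equiv_pi (hr p.asIdeal (asIdeal_mem_associatedPrimes_of_isMin hp)).some
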